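/- arXiv:2510.11657 — 2 statements merged into one kernel-verified Lean document; each statement's English description precedes it below -/
import Mathlib

section
/- Let (Ω, F, P) be a probability space, d ≥ 1, and let X : [0,1] × Ω → ℝ^d (written X_t) be a stochastic process all of whose sample paths are twice continuously differentiable, with pathwise derivatives Ẋ_t and Ẍ_t. Fix t ∈ [0,1] and assume E‖X_t‖² < ∞, E‖Ẍ_t‖² < ∞, and E‖Π_t(X_t)‖_F² < ∞, where Π_t : ℝ^d → ℝ^{d×d} is a Borel measurable matrix field such that Π_t(X_t) is a version of E[Ẋ_t ⊗ Ẋ_t | σ(X_t)] − E[Ẋ_t | σ(X_t)] ⊗ E[Ẋ_t | σ(X_t)]. Suppose the weak balance law holds at time t: for every smooth compactly supported vector field Φ : ℝ^d → ℝ^d, −E[(DΦ)(X_t) : Π_t(X_t)] = E[Φ(X_t) · Ẍ_t]. Then −E[Tr Π_t(X_t)] = E[X_t · Ẍ_t]. -/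
open Set MeasureTheory

/-!
Let `Φ` be a test field that is the identity near the origin. Its rescalings `r • Φ (r⁻¹ • x)` are
again test fields; as `r → ∞` they converge pointwise to `x`, and their derivatives `DΦ (r⁻¹ • x)`
converge to the identity. If `Φ` is `K`-Lipschitz, these convergences are dominated by `K ‖x‖` and
`K` respectively, so the weak balance law passes to the limit.
-/

open Filter
open scoped Topology

section BlowUp

variable {E F : Type*} [NormedAddCommGroup E] [NormedSpace ℝ E]
  [NormedAddCommGroup F] [NormedSpace ℝ F] {Φ : E → F}

/-- The blow-up of a field `Φ` about the origin with scale `r`. It is used to approximate a linear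
field by test fields: if `Φ 0 = 0`, it converges to the derivative of `Φ` at the origin as `r → ∞`.
At `r = 0` it is the zero field. -/
noncomputable def blowUp (Φ : E → F) (r : ℝ) (x : E) : F :=
  r • Φ (r⁻¹ • x)

theorem contDiff_blowUp {n : WithTop ℕ∞} (hΦ : ContDiff ℝ n Φ) (r : ℝ) :
    ContDiff ℝ n (blowUp Φ r) :=
  (hΦ.comp (contDiff_const_smul r⁻¹)).const_smul r

theorem hasCompactSupport_blowUp (hΦ : HasCompactSupport Φ) (r : ℝ) :
    HasCompactSupport (blowUp Φ r) := by
  rcases eq_or_ne r 0 with rfl | hr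
  · have hzero : blowUp Φ 0 = 0 := funext fun _ => zero_smul ℝ _
    exact hzero ▸ HasCompactSupport.zero
  · exact (hΦ.comp_smul (inv_ne_zero hr)).smul_left (f := fun _ : E => r)

theorem fderiv_blowUp {r : ℝ} (hr : r ≠ 0) (x : E) :
    fderiv ℝ (blowUp Φ r) x = fderiv ℝ Φ (r⁻¹ • x) := by
  change fderiv ℝ (r • fun y => Φ (r⁻¹ • y)) x = _
  rw [fderiv_const_smul_field, Pi.smul_apply, fderiv_comp_smul, smul_inv_smul₀ hr]

theorem norm_blowUp_le {K : NNReal} (hΦ : LipschitzWith K Φ) (hΦ0 : Φ 0 = 0) (r : ℝ) (x : E) :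
    ‖blowUp Φ r x‖ ≤ K * ‖x‖ := by
  rcases eq_or_ne r 0 with rfl | hr
  · simpa [blowUp] using mul_nonneg K.coe_nonneg (norm_nonneg x)
  · calc ‖blowUp Φ r x‖ = ‖r‖ * ‖Φ (r⁻¹ • x)‖ := norm_smul _ _
      _ ≤ ‖r‖ * (K * ‖r⁻¹ • x‖) := by gcongr; exact hΦ.norm_le_mul hΦ0 _
      _ = K * ‖x‖ := by rw [mul_left_comm, ← norm_smul, smul_inv_smul₀ hr]

theorem tendsto_blowUp (hΦ : DifferentiableAt ℝ Φ 0) (hΦ0 : Φ 0 = 0) (x : E) :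
    Tendsto (fun r => blowUp Φ r x) atTop (𝓝 (fderiv ℝ Φ 0 x)) := by
  simpa [blowUp, hΦ0] using hΦ.hasFDerivAt.lim_real x

theorem tendsto_fderiv_blowUp (hΦ : ContinuousAt (fderiv ℝ Φ) 0) (x : E) :
    Tendsto (fun r => fderiv ℝ (blowUp Φ r) x) atTop (𝓝 (fderiv ℝ Φ 0)) := by
  have hscale : Tendsto (fun r : ℝ => r⁻¹ • x) atTop (𝓝 0) := by
    simpa using (tendsto_inv_atTop_zero (𝕜 := ℝ)).smul_const x
  refine (hΦ.tendsto.comp hscale).congr' ?_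
  filter_upwards [eventually_ne_atTop 0] with r hr using (fderiv_blowUp hr x).symm

theorem exists_contDiff_hasCompactSupport_eventuallyEq_id [FiniteDimensional ℝ E] (n : ℕ∞) :
    ∃ Φ : E → E, ContDiff ℝ n Φ ∧ HasCompactSupport Φ ∧ Φ =ᶠ[𝓝 0] id := by
  let φ : ContDiffBump (0 : E) := ⟨1, 2, one_pos, one_lt_two⟩
  refine ⟨fun x => φ x • x, φ.contDiff.smul contDiff_id, φ.hasCompactSupport.smul_right, ?_⟩
  filter_upwards [φ.eventuallyEq_one] with x hx
  simp [hx]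

end BlowUp

section WeakIdentity

variable {Ω E F G : Type*} [MeasurableSpace Ω] {μ : Measure Ω}
  [NormedAddCommGroup E] [NormedSpace ℝ E] [NormedAddCommGroup F] [NormedSpace ℝ F]
  [NormedAddCommGroup G] [NormedSpace ℝ G]
  {Φ : E → F} {K : NNReal} {Y : Ω → E}

theorem tendsto_integral_clm_blowUp {ℓ : Ω → F →L[ℝ] G} (hΦ : LipschitzWith K Φ)
    (hΦd : DifferentiableAt ℝ Φ 0) (hΦ0 : Φ 0 = 0)
    (hY : AEStronglyMeasurable Y μ) (hℓ : AEStronglyMeasurable ℓ μ)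
    (hℓY : Integrable (fun ω => ‖ℓ ω‖ * ‖Y ω‖) μ) :
    Tendsto (fun r => ∫ ω, ℓ ω (blowUp Φ r (Y ω)) ∂μ) atTop
      (𝓝 (∫ ω, ℓ ω (fderiv ℝ Φ 0 (Y ω)) ∂μ)) := by
  refine tendsto_integral_filter_of_dominated_convergence (fun ω => K * (‖ℓ ω‖ * ‖Y ω‖))
    (.of_forall fun r => ?_) (.of_forall fun r => .of_forall fun ω => ?_) (hℓY.const_mul _)
    (.of_forall fun ω => ((ℓ ω).continuous.tendsto _).comp (tendsto_blowUp hΦd hΦ0 _))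
  · have hcont : Continuous (blowUp Φ r) :=
      (hΦ.continuous.comp (continuous_const_smul r⁻¹)).const_smul r
    exact (ContinuousLinearMap.id ℝ (F →L[ℝ] G)).aestronglyMeasurable_comp₂ hℓ
      (hcont.comp_aestronglyMeasurable hY)
  · calc ‖ℓ ω (blowUp Φ r (Y ω))‖ ≤ ‖ℓ ω‖ * (K * ‖Y ω‖) :=
          (ℓ ω).le_opNorm_of_le (norm_blowUp_le hΦ hΦ0 r _)
      _ = K * (‖ℓ ω‖ * ‖Y ω‖) := mul_left_comm _ _ _

theorem tendsto_integral_sum_clm_fderiv_blowUp {ι : Type*} [Fintype ι]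
    {η : ι → Ω → F →L[ℝ] G} {V : ι → Ω → E}
    (hΦ : LipschitzWith K Φ) (hDΦ : Continuous (fderiv ℝ Φ)) (hY : AEStronglyMeasurable Y μ)
    (hη : ∀ i, AEStronglyMeasurable (η i) μ) (hV : ∀ i, AEStronglyMeasurable (V i) μ)
    (hηV : ∀ i, Integrable (fun ω => ‖η i ω‖ * ‖V i ω‖) μ) :
    Tendsto (fun r => ∫ ω, ∑ i, η i ω (fderiv ℝ (blowUp Φ r) (Y ω) (V i ω)) ∂μ) atTop
      (𝓝 (∫ ω, ∑ i, η i ω (fderiv ℝ Φ 0 (V i ω)) ∂μ)) := by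
  refine tendsto_integral_filter_of_dominated_convergence
    (fun ω => ∑ i, K * (‖η i ω‖ * ‖V i ω‖)) ?_ ?_
    (integrable_finsetSum _ fun i _ => (hηV i).const_mul _)
    (.of_forall fun ω => tendsto_finsetSum _ fun i _ => ?_)
  · filter_upwards [eventually_ne_atTop 0] with r hr
    simp only [fderiv_blowUp hr]
    refine Finset.aestronglyMeasurable_fun_sum _ fun i _ => ?_
    have hD : AEStronglyMeasurable (fun ω => fderiv ℝ Φ (r⁻¹ • Y ω)) μ :=
      (hDΦ.comp (continuous_const_smul r⁻¹)).comp_aestronglyMeasurable hY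
    exact isBoundedBilinearMap_apply.continuous.comp_aestronglyMeasurable <|
      (hη i).prodMk <|
        isBoundedBilinearMap_apply.continuous.comp_aestronglyMeasurable (hD.prodMk (hV i))
  · filter_upwards [eventually_ne_atTop 0] with r hr
    refine .of_forall fun ω => norm_sum_le_of_le _ fun i _ => ?_
    rw [fderiv_blowUp hr]
    calc ‖η i ω (fderiv ℝ Φ (r⁻¹ • Y ω) (V i ω))‖ ≤ ‖η i ω‖ * (K * ‖V i ω‖) :=
          (η i ω).le_opNorm_of_le <|
            ContinuousLinearMap.le_of_opNorm_le _ (norm_fderiv_le_of_lipschitz ℝ hΦ) _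
      _ = K * (‖η i ω‖ * ‖V i ω‖) := mul_left_comm _ _ _
  · have hD := tendsto_fderiv_blowUp hDΦ.continuousAt (Y ω)
    have heval : Continuous fun L : E →L[ℝ] F => η i ω (L (V i ω)) := by fun_prop
    exact (heval.tendsto _).comp hD

theorem integral_sum_clm_eq_of_forall_hasCompactSupport [FiniteDimensional ℝ E]
    {ι : Type*} [Fintype ι] {η : ι → Ω → E →L[ℝ] G} {V : ι → Ω → E} {ℓ : Ω → E →L[ℝ] G}
    (hY : AEStronglyMeasurable Y μ) (hη : ∀ i, AEStronglyMeasurable (η i) μ)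
    (hV : ∀ i, AEStronglyMeasurable (V i) μ) (hℓ : AEStronglyMeasurable ℓ μ)
    (hηV : ∀ i, Integrable (fun ω => ‖η i ω‖ * ‖V i ω‖) μ)
    (hℓY : Integrable (fun ω => ‖ℓ ω‖ * ‖Y ω‖) μ)
    (h : ∀ Φ : E → E, ContDiff ℝ (⊤ : ℕ∞) Φ → HasCompactSupport Φ →
      ∫ ω, ∑ i, η i ω (fderiv ℝ Φ (Y ω) (V i ω)) ∂μ = ∫ ω, ℓ ω (Φ (Y ω)) ∂μ) :
    ∫ ω, ∑ i, η i ω (V i ω) ∂μ = ∫ ω, ℓ ω (Y ω) ∂μ := by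
  obtain ⟨Φ, hΦ, hΦc, hΦid⟩ := exists_contDiff_hasCompactSupport_eventuallyEq_id (E := E) ⊤
  obtain ⟨K, hK⟩ := hΦ.lipschitzWith_of_hasCompactSupport hΦc (by simp)
  have hΦ0 : Φ 0 = 0 := hΦid.eq_of_nhds
  have hDΦ0 : fderiv ℝ Φ 0 = .id ℝ E := hΦid.fderiv_eq.trans fderiv_id
  have hleft :=
    tendsto_integral_sum_clm_fderiv_blowUp hK (hΦ.continuous_fderiv (by simp)) hY hη hV hηV
  have hright := tendsto_integral_clm_blowUp hK (hΦ.differentiable (by simp) 0) hΦ0 hY hℓ hℓY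
  simp only [hDΦ0, ContinuousLinearMap.id_apply] at hleft hright
  exact tendsto_nhds_unique hleft <| hright.congr fun r =>
    (h _ (contDiff_blowUp hΦ r) (hasCompactSupport_blowUp hΦc r)).symm

end WeakIdentity

theorem fderiv_euclidean_apply {E ι : Type*} [NormedAddCommGroup E] [NormedSpace ℝ E]
    [Finite ι] {Φ : E → EuclideanSpace ℝ ι} {x : E} (hΦ : DifferentiableAt ℝ Φ x) (v : E) (i : ι) :
    fderiv ℝ (fun y => Φ y i) x v = fderiv ℝ Φ x v i := by
  have := Fintype.ofFinite ι
  have hcomp := (EuclideanSpace.proj (𝕜 := ℝ) i).hasFDerivAt.comp x hΦ.hasFDerivAt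
  exact congr($hcomp.fderiv v)

theorem memLp_two_of_integrable_sum_sq {Ω ι : Type*} [MeasurableSpace Ω] {μ : Measure Ω}
    [Fintype ι] {f : ι → Ω → ℝ} (hf : ∀ i, AEStronglyMeasurable (f i) μ)
    (hsum : Integrable (fun ω => ∑ i, f i ω ^ 2) μ) (i : ι) : MemLp (f i) 2 μ := by
  refine (memLp_two_iff_integrable_sq (hf i)).2 <|
    hsum.mono' ((hf i).pow 2) (.of_forall fun ω => ?_)
  rw [Real.norm_of_nonneg (sq_nonneg _)]
  exact Finset.single_le_sum (f := fun i => f i ω ^ 2) (fun i _ => sq_nonneg _) (Finset.mem_univ i)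

theorem integrable_matrix_apply_of_integrable_sum_sq {Ω ι κ : Type*} [MeasurableSpace Ω]
    {μ : Measure Ω} [IsFiniteMeasure μ] [Fintype ι] [Fintype κ] {A : Ω → Matrix ι κ ℝ}
    (hA : ∀ i j, AEStronglyMeasurable (fun ω => A ω i j) μ)
    (hsum : Integrable (fun ω => ∑ i, ∑ j, A ω i j ^ 2) μ) (i : ι) (j : κ) :
    Integrable (fun ω => A ω i j) μ := by
  simp only [← Fintype.sum_prod_type'] at hsum
  exact (memLp_two_of_integrable_sum_sq (fun p : ι × κ => hA p.1 p.2) hsum (i, j)).integrable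
    one_le_two

theorem integrable_norm_mul_norm_of_integrable_sq {Ω E F : Type*} [MeasurableSpace Ω]
    {μ : Measure Ω} [NormedAddCommGroup E] [NormedAddCommGroup F] {f : Ω → E} {g : Ω → F}
    (hf : AEStronglyMeasurable f μ) (hg : AEStronglyMeasurable g μ)
    (hf2 : Integrable (fun ω => ‖f ω‖ ^ 2) μ) (hg2 : Integrable (fun ω => ‖g ω‖ ^ 2) μ) :
    Integrable (fun ω => ‖f ω‖ * ‖g ω‖) μ :=
  ((memLp_two_iff_integrable_sq_norm hf).2 hf2).norm.integrable_mul
    ((memLp_two_iff_integrable_sq_norm hg).2 hg2).norm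

theorem trace_identity_of_weak_balance_general
    {Ω ι : Type*} [MeasurableSpace Ω] [Fintype ι] [DecidableEq ι] {μ : Measure Ω}
    {Y Z : Ω → EuclideanSpace ℝ ι} {A : Ω → Matrix ι ι ℝ}
    (hY : AEStronglyMeasurable Y μ) (hZ : AEStronglyMeasurable Z μ)
    (hYZ : Integrable (fun ω => ‖Z ω‖ * ‖Y ω‖) μ)
    (hA : ∀ i j, Integrable (fun ω => A ω i j) μ)
    (hweak : ∀ Φ : EuclideanSpace ℝ ι → EuclideanSpace ℝ ι,
      ContDiff ℝ (⊤ : ℕ∞) Φ → HasCompactSupport Φ →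
      -∫ ω, (∑ i, ∑ j,
          fderiv ℝ (fun y => Φ y j) (Y ω) (EuclideanSpace.single i 1) * A ω i j) ∂μ
        = ∫ ω, (∑ i, Φ (Y ω) i * Z ω i) ∂μ) :
    -∫ ω, (∑ i, A ω i i) ∂μ = ∫ ω, (∑ i, Y ω i * Z ω i) ∂μ := by
  let row (i : ι) (ω : Ω) : EuclideanSpace ℝ ι := WithLp.toLp 2 (A ω i)
  have hrow (i : ι) : Integrable (row i) μ := .of_eval_piLp (hA i)
  have hdot (y z : EuclideanSpace ℝ ι) : ∑ i, y i * z i = innerSL ℝ z y := by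
    simp [PiLp.inner_apply]
  have htrace (ω : Ω) : ∑ i, A ω i i = ∑ i, innerSL ℝ (row i ω) (EuclideanSpace.single i 1) := by
    simp only [← hdot]
    simp [row]
  have hinnerSL {W : Ω → EuclideanSpace ℝ ι} (hW : AEStronglyMeasurable W μ) :
      AEStronglyMeasurable (fun ω => innerSL ℝ (W ω)) μ :=
    (innerSL ℝ).continuous.comp_aestronglyMeasurable hW
  rw [neg_eq_iff_eq_neg, ← integral_neg]
  simp only [htrace, hdot, ← neg_apply]
  refine integral_sum_clm_eq_of_forall_hasCompactSupport hY
    (fun i => hinnerSL (hrow i).aestronglyMeasurable) (fun _ => aestronglyMeasurable_const)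
    (hinnerSL hZ).neg (fun i => by simpa using (hrow i).norm) (by simpa using hYZ)
    fun Φ hΦ hΦc => ?_
  have hΦd : Differentiable ℝ Φ := hΦ.differentiable (by simp)
  have hbalance := neg_eq_iff_eq_neg.1 (hweak Φ hΦ hΦc)
  rw [← integral_neg] at hbalance
  simpa only [fderiv_euclidean_apply (hΦd _), neg_apply, ← hdot] using hbalance

/-- For a process with C² sample paths and square-integrable `X_t`, `Ẍ_t`,
Reynolds tensor `Π_t`, the weak balance law
`−E[(DΦ)(X_t) : Π_t(X_t)] = E[Φ(X_t)·Ẍ_t]` (for all smooth compactly supported `Φ`)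
implies `−E[Tr Π_t(X_t)] = E[X_t·Ẍ_t]`. -/
theorem trace_identity_of_weak_balance
    {Ω : Type*} [MeasurableSpace Ω] (P : Measure Ω) [IsProbabilityMeasure P]
    (d : ℕ) (hd : 1 ≤ d)
    (X X' X'' : ℝ → Ω → EuclideanSpace ℝ (Fin d))
    (hXmeas : ∀ s, Measurable (X s))
    (hX'meas : ∀ s, Measurable (X' s))
    (hX''meas : ∀ s, Measurable (X'' s))
    (hderiv : ∀ ω, ∀ s ∈ Icc (0:ℝ) 1,
        HasDerivWithinAt (fun u => X u ω) (X' s ω) (Icc (0:ℝ) 1) s)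
    (hderiv' : ∀ ω, ∀ s ∈ Icc (0:ℝ) 1,
        HasDerivWithinAt (fun u => X' u ω) (X'' s ω) (Icc (0:ℝ) 1) s)
    (hcont : ∀ ω, ContinuousOn (fun s => X'' s ω) (Icc (0:ℝ) 1))
    (t : ℝ) (ht : t ∈ Icc (0:ℝ) 1)
    (hX2 : Integrable (fun ω => ‖X t ω‖ ^ 2) P)
    (hX''2 : Integrable (fun ω => ‖X'' t ω‖ ^ 2) P)
    (Pmat : EuclideanSpace ℝ (Fin d) → Matrix (Fin d) (Fin d) ℝ)
    (hPmeas : ∀ i j : Fin d, Measurable fun x => Pmat x i j)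
    (hP2 : Integrable (fun ω => ∑ i, ∑ j, (Pmat (X t ω) i j) ^ 2) P)
    (hReynolds : ∀ i j : Fin d,
        (fun ω => Pmat (X t ω) i j)
          =ᵐ[P] fun ω =>
            (P[(fun ω' => X' t ω' i * X' t ω' j) |
                MeasurableSpace.comap (X t) inferInstance]) ω
            - (P[(fun ω' => X' t ω' i) | MeasurableSpace.comap (X t) inferInstance]) ω
              * (P[(fun ω' => X' t ω' j) | MeasurableSpace.comap (X t) inferInstance]) ω)
    (hweak : ∀ Φ : EuclideanSpace ℝ (Fin d) → EuclideanSpace ℝ (Fin d),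
        ContDiff ℝ (⊤ : ℕ∞) Φ → HasCompactSupport Φ →
        -∫ ω, (∑ i, ∑ j,
            fderiv ℝ (fun y => Φ y j) (X t ω) (EuclideanSpace.single i 1)
              * Pmat (X t ω) i j) ∂P
          = ∫ ω, (∑ i, Φ (X t ω) i * X'' t ω i) ∂P) :
    -∫ ω, (∑ i, Pmat (X t ω) i i) ∂P = ∫ ω, (∑ i, X t ω i * X'' t ω i) ∂P := by
  have hX := (hXmeas t).aestronglyMeasurable (μ := P)
  have hX'' := (hX''meas t).aestronglyMeasurable (μ := P)
  exact trace_identity_of_weak_balance_general hX hX''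
    (integrable_norm_mul_norm_of_integrable_sq hX'' hX hX''2 hX2)
    (integrable_matrix_apply_of_integrable_sum_sq
      (fun i j => ((hPmeas i j).comp (hXmeas t)).aestronglyMeasurable) hP2) hweak
end

section
/- Let (Ω, F, P) be a probability space, d ≥ 1, and let X : [0,1] × Ω → ℝ^d (written X_t) be a stochastic process all of whose sample paths are twice continuously differentiable, with pathwise derivatives Ẋ_t and Ẍ_t. Fix t ∈ [0,1] and assume E‖X_t‖² < ∞, E‖Ẋ_t‖² < ∞, E‖Ẍ_t‖² < ∞, and E‖Π_t(X_t)‖_F² < ∞, where Π_t : ℝ^d → ℝ^{d×d} is a Borel measurable matrix field such that Π_t(X_t) is a version of E[Ẋ_t ⊗ Ẋ_t | σ(X_t)] − E[Ẋ_t | σ(X_t)] ⊗ E[Ẋ_t | σ(X_t)]. Suppose that for every smooth compactly supported vector field Φ : ℝ^d → ℝ^d, −E[(DΦ)(X_t) : Π_t(X_t)] = E[Φ(X_t) · Ẍ_t]. Then, noting the pathwise identity ∂_tt ‖X_t‖² = 2 X_t · Ẍ_t + 2 ‖Ẋ_t‖², one has E[∂_tt ‖X_t‖²] ≤ 2 E[‖Ẋ_t‖²].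 -/
open Set MeasureTheory

/-! Formally one tests the balance law against `Φ = id`: `E[X_t · Ẍ_t] = -E[tr Π_t(X_t)]`.
The diagonal entries of `Π_t(X_t)` are conditional variances, so the right-hand side is nonpositive,
and the pathwise identity for `∂_tt ‖X_t‖²` concludes. Since `id` is not compactly supported, it is
replaced by `Φ_c x = f (c x) x` with `f` a bump function and `c → 0`. By scaling,
`(DΦ_c)(x) = (DΦ_1)(c x)`, so the derivatives are bounded uniformly in `c` and dominated convergence
applies on both sides. -/

open Filter ProbabilityTheory Topology
open scoped RealInnerProductSpace

section InnerProductSpace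

variable {F : Type*} [NormedAddCommGroup F] [InnerProductSpace ℝ F]

lemma derivWithin_derivWithin_norm_sq {T : Set ℝ} (hT : UniqueDiffOn ℝ T) {x x' : ℝ → F} {a : F}
    {t : ℝ} (ht : t ∈ T) (hx : ∀ s ∈ T, HasDerivWithinAt x (x' s) T s)
    (hx' : HasDerivWithinAt x' a T t) :
    derivWithin (fun s => derivWithin (fun u => ‖x u‖ ^ 2) T s) T t
      = 2 * ⟪x t, a⟫ + 2 * ‖x' t‖ ^ 2 := by
  have first_deriv : ∀ s ∈ T, derivWithin (fun u => ‖x u‖ ^ 2) T s = 2 * ⟪x s, x' s⟫ := fun s hs =>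
    (hx s hs).norm_sq.derivWithin (hT s hs)
  have second_deriv := (((hx t ht).inner ℝ hx').const_mul 2).derivWithin (hT t ht)
  rw [derivWithin_congr first_deriv (first_deriv t ht), second_deriv,
    real_inner_self_eq_norm_sq, mul_add]

lemma integrable_inner_of_memLp_two {Ω : Type*} [MeasurableSpace Ω] {P : Measure Ω}
    {U V : Ω → F} (hU : MemLp U 2 P) (hV : MemLp V 2 P) : Integrable (fun ω => ⟪U ω, V ω⟫) P :=
  memLp_one_iff_integrable.1 ((innerSL ℝ).memLp_of_bilin 1 hU hV)

end InnerProductSpace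

section ConditionalCovariance

variable {Ω : Type*} {m mΩ : MeasurableSpace Ω} {P : Measure[mΩ] Ω} {U V : Ω → ℝ}

/-- The conditional covariance `E[UV | m] - E[U | m] E[V | m]`, the entrywise form of the matrix
`E[Ẋ ⊗ Ẋ | m] - E[Ẋ | m] ⊗ E[Ẋ | m]`. It is meaningful for square-integrable `U` and `V`. -/
noncomputable def condCov (m : MeasurableSpace Ω) {mΩ : MeasurableSpace Ω} (U V : Ω → ℝ)
    (P : Measure[mΩ] Ω) : Ω → ℝ :=
  fun ω => (P[fun ω' => U ω' * V ω' | m]) ω - (P[U | m]) ω * (P[V | m]) ω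

lemma integrable_condCov (hU : MemLp U 2 P) (hV : MemLp V 2 P) : Integrable (condCov m U V P) P :=
  integrable_condExp.sub ((hU.condExp one_le_two).integrable_mul (hV.condExp one_le_two))

lemma condCov_self_ae_eq_condVar [IsFiniteMeasure P] (hm : m ≤ mΩ) (hU : MemLp U 2 P) :
    condCov m U U P =ᵐ[P] condVar m U P := by
  filter_upwards [condVar_ae_eq_condExp_sq_sub_sq_condExp hm hU] with ω hω
  simp only [hω, condCov, sq, Pi.sub_apply, Pi.mul_apply]
  rfl

lemma condCov_self_nonneg [IsFiniteMeasure P] (hm : m ≤ mΩ) (hU : MemLp U 2 P) :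
    0 ≤ᵐ[P] condCov m U U P :=
  EventuallyLE.trans_eq (condExp_nonneg (ae_of_all _ fun _ => sq_nonneg _))
    (condCov_self_ae_eq_condVar hm hU).symm

end ConditionalCovariance

section IdentityCutoff

variable {E : Type*} [NormedAddCommGroup E] [NormedSpace ℝ E] [HasContDiffBump E]

/-- The identity vector field truncated at the scale `c⁻¹`, the test field used in the balance law.
The truncation rescales a fixed bump function, so the derivatives are bounded uniformly in `c`. -/
noncomputable def identityCutoff (f : ContDiffBump (0 : E)) (c : ℝ) (x : E) : E := f (c • x) • x

variable (f : ContDiffBump (0 : E))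

lemma contDiff_identityCutoff (c : ℝ) : ContDiff ℝ (⊤ : ℕ∞) (identityCutoff f c) :=
  (f.contDiff.comp (contDiff_const_smul c)).smul contDiff_id

lemma hasCompactSupport_identityCutoff [FiniteDimensional ℝ E] {c : ℝ} (hc : c ≠ 0) :
    HasCompactSupport (identityCutoff f c) :=
  (f.hasCompactSupport.comp_homeomorph (Homeomorph.smulOfNeZero c hc)).smul_right

lemma identityCutoff_eventuallyEq_id (x : E) :
    ∀ᶠ c in 𝓝 (0 : ℝ), identityCutoff f c =ᶠ[𝓝 x] id := by
  have smul_tendsto : Tendsto (fun p : ℝ × E => p.1 • p.2) (𝓝 0 ×ˢ 𝓝 x) (𝓝 0) := by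
    rw [← nhds_prod_eq, ← zero_smul ℝ x]
    exact (continuous_fst.smul continuous_snd).tendsto (0, x)
  filter_upwards [(smul_tendsto.eventually f.eventuallyEq_one).curry] with c hc
  filter_upwards [hc] with y hy
  simp [identityCutoff, hy]

lemma fderiv_identityCutoff {c : ℝ} (hc : c ≠ 0) (x : E) :
    fderiv ℝ (identityCutoff f c) x = fderiv ℝ (identityCutoff f 1) (c • x) := by
  have rescaled : identityCutoff f c = c⁻¹ • fun y => identityCutoff f 1 (c • y) := by
    ext y
    simp [identityCutoff, smul_comm c⁻¹, hc]
  rw [rescaled, fderiv_const_smul_field, Pi.smul_apply, fderiv_comp_smul, inv_smul_smul₀ hc]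

lemma exists_norm_fderiv_identityCutoff_le [FiniteDimensional ℝ E] :
    ∃ C, ∀ c ≠ 0, ∀ x, ‖fderiv ℝ (identityCutoff f c) x‖ ≤ C := by
  have hsupp := (hasCompactSupport_identityCutoff f one_ne_zero).fderiv ℝ
  obtain ⟨C, hC⟩ := hsupp.exists_bound_of_continuous
    ((contDiff_identityCutoff f 1).continuous_fderiv (by simp))
  exact ⟨C, fun c hc x => fderiv_identityCutoff f hc x ▸ hC _⟩

end IdentityCutoff

section WeakBalance

-- Lets instance search find the operator norm on `(E →L[ℝ] E) →L[ℝ] F`.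
set_option maxSynthPendingDepth 3

variable {Ω E F : Type*} {mΩ : MeasurableSpace Ω} {P : Measure Ω}
  [NormedAddCommGroup E] [NormedSpace ℝ E] [HasContDiffBump E]
  [NormedAddCommGroup F] [NormedSpace ℝ F] {X : Ω → E} {c : ℕ → ℝ}

lemma tendsto_integral_apply_identityCutoff (f : ContDiffBump (0 : E))
    (hc : Tendsto c atTop (𝓝[≠] 0)) (hX : AEStronglyMeasurable X P) {B : Ω → E →L[ℝ] F}
    (hB : Integrable (fun ω => B ω (X ω)) P) :
    Tendsto (fun n => ∫ ω, B ω (identityCutoff f (c n) (X ω)) ∂P) atTop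
      (𝓝 (∫ ω, B ω (X ω) ∂P)) := by
  simp only [identityCutoff, map_smul]
  refine tendsto_integral_of_dominated_convergence _ (fun n => ?_) hB.norm
    (fun n => ae_of_all _ fun ω => ?_) (ae_of_all _ fun ω => ?_)
  · exact (f.continuous.comp_aestronglyMeasurable (hX.const_smul (c n))).smul hB.1
  · rw [norm_smul, Real.norm_of_nonneg f.nonneg]
    exact mul_le_of_le_one_left (norm_nonneg _) f.le_one
  · refine tendsto_nhds_of_eventually_eq ?_
    filter_upwards [(tendsto_nhds_of_tendsto_nhdsWithin hc).eventually
      (identityCutoff_eventuallyEq_id f (X ω))] with n hn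
    rw [← map_smul]
    exact congrArg (B ω) hn.eq_of_nhds

lemma tendsto_integral_apply_fderiv_identityCutoff [FiniteDimensional ℝ E]
    (f : ContDiffBump (0 : E)) (hc : Tendsto c atTop (𝓝[≠] 0)) (hX : AEStronglyMeasurable X P)
    {L : Ω → (E →L[ℝ] E) →L[ℝ] F} (hL : Integrable L P) :
    Tendsto (fun n => ∫ ω, L ω (fderiv ℝ (identityCutoff f (c n)) (X ω)) ∂P) atTop
      (𝓝 (∫ ω, L ω (.id ℝ E) ∂P)) := by
  obtain ⟨hc_lim, hc_ne⟩ := tendsto_nhdsWithin_iff.1 hc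
  obtain ⟨C, hC⟩ := exists_norm_fderiv_identityCutoff_le f
  refine tendsto_integral_filter_of_dominated_convergence (fun ω => ‖L ω‖ * C)
    (.of_forall fun n => ?_) ?_ (hL.norm.mul_const C) (ae_of_all _ fun ω => ?_)
  · have hD := (contDiff_identityCutoff f (c n)).continuous_fderiv (by simp)
    exact isBoundedBilinearMap_apply.continuous.comp_aestronglyMeasurable
      (hL.1.prodMk (hD.comp_aestronglyMeasurable hX))
  · filter_upwards [hc_ne] with n hn
    exact ae_of_all _ fun ω => (L ω).le_opNorm_of_le (hC _ hn _)
  · refine tendsto_nhds_of_eventually_eq ?_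
    filter_upwards [hc_lim.eventually (identityCutoff_eventuallyEq_id f (X ω))] with n hn
    rw [hn.fderiv_eq, fderiv_id]

lemma neg_integral_apply_id_of_weak_balance [FiniteDimensional ℝ E] (hX : AEStronglyMeasurable X P)
    {L : Ω → (E →L[ℝ] E) →L[ℝ] F} (hL : Integrable L P)
    {B : Ω → E →L[ℝ] F} (hB : Integrable (fun ω => B ω (X ω)) P)
    (hweak : ∀ Φ : E → E, ContDiff ℝ (⊤ : ℕ∞) Φ → HasCompactSupport Φ →
      -∫ ω, L ω (fderiv ℝ Φ (X ω)) ∂P = ∫ ω, B ω (Φ (X ω)) ∂P) :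
    -∫ ω, L ω (.id ℝ E) ∂P = ∫ ω, B ω (X ω) ∂P := by
  let f : ContDiffBump (0 : E) := default
  let c : ℕ → ℝ := fun n => 1 / ((n : ℝ) + 1)
  have hc_ne (n : ℕ) : c n ≠ 0 := Nat.one_div_pos_of_nat.ne'
  have hc : Tendsto c atTop (𝓝[≠] 0) :=
    tendsto_nhdsWithin_iff.2 ⟨tendsto_one_div_add_atTop_nhds_zero_nat, .of_forall hc_ne⟩
  refine tendsto_nhds_unique (tendsto_integral_apply_fderiv_identityCutoff f hc hX hL).neg
    ((tendsto_integral_apply_identityCutoff f hc hX hB).congr fun n => ?_)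
  exact (hweak _ (contDiff_identityCutoff f _) (hasCompactSupport_identityCutoff f (hc_ne n))).symm

end WeakBalance

section Coordinates

set_option maxSynthPendingDepth 3

variable {Ω ι : Type*} {mΩ : MeasurableSpace Ω} {P : Measure Ω} [Fintype ι] [DecidableEq ι]

/-- The Frobenius pairing with `Mᵀ`, that is `T ↦ tr (M T)`, as a continuous linear functional on
operators. The index order is that of the balance law: for `T = DΦ`, the entry `M i j` multiplies
`∂_i Φ_j`. -/
noncomputable def frobeniusPairing (M : Matrix ι ι ℝ) :
    (EuclideanSpace ℝ ι →L[ℝ] EuclideanSpace ℝ ι) →L[ℝ] ℝ :=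
  ∑ i, ∑ j, M i j • (EuclideanSpace.proj j ∘L
    ContinuousLinearMap.apply ℝ (EuclideanSpace ℝ ι) (EuclideanSpace.single i (1 : ℝ)))

lemma frobeniusPairing_apply (M : Matrix ι ι ℝ)
    (T : EuclideanSpace ℝ ι →L[ℝ] EuclideanSpace ℝ ι) :
    frobeniusPairing M T = ∑ i, ∑ j, T (EuclideanSpace.single i 1) j * M i j := by
  simp [frobeniusPairing, mul_comm]

lemma frobeniusPairing_id (M : Matrix ι ι ℝ) :
    frobeniusPairing M (.id ℝ (EuclideanSpace ℝ ι)) = M.trace := by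
  simp [frobeniusPairing_apply, Matrix.trace]

lemma frobeniusPairing_fderiv (M : Matrix ι ι ℝ)
    {Φ : EuclideanSpace ℝ ι → EuclideanSpace ℝ ι} {x : EuclideanSpace ℝ ι}
    (hΦ : DifferentiableAt ℝ Φ x) :
    frobeniusPairing M (fderiv ℝ Φ x)
      = ∑ i, ∑ j, fderiv ℝ (fun y => Φ y j) x (EuclideanSpace.single i 1) * M i j := by
  have fderiv_coord (j : ι) : fderiv ℝ (fun y => Φ y j) x = EuclideanSpace.proj j ∘L fderiv ℝ Φ x :=
    ((EuclideanSpace.proj (𝕜 := ℝ) j).hasFDerivAt.comp x hΦ.hasFDerivAt).fderiv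
  simp [frobeniusPairing_apply, fderiv_coord]

lemma integrable_frobeniusPairing {M : Ω → Matrix ι ι ℝ}
    (hM : ∀ i j, Integrable (fun ω => M ω i j) P) :
    Integrable (fun ω => frobeniusPairing (M ω)) P :=
  integrable_finsetSum _ fun i _ => integrable_finsetSum _ fun j _ => (hM i j).smul_const _

lemma integral_inner_eq_neg_integral_trace_of_weak_balance {X A : Ω → EuclideanSpace ℝ ι}
    {M : Ω → Matrix ι ι ℝ} (hX : AEStronglyMeasurable X P)
    (hM : ∀ i j, Integrable (fun ω => M ω i j) P) (hXA : Integrable (fun ω => ⟪X ω, A ω⟫) P)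
    (hweak : ∀ Φ : EuclideanSpace ℝ ι → EuclideanSpace ℝ ι,
      ContDiff ℝ (⊤ : ℕ∞) Φ → HasCompactSupport Φ →
      -∫ ω, (∑ i, ∑ j, fderiv ℝ (fun y => Φ y j) (X ω) (EuclideanSpace.single i 1) * M ω i j) ∂P
        = ∫ ω, (∑ i, Φ (X ω) i * A ω i) ∂P) :
    ∫ ω, ⟪X ω, A ω⟫ ∂P = -∫ ω, (M ω).trace ∂P := by
  have inner_comm_apply (x a : EuclideanSpace ℝ ι) : innerSL ℝ a x = ⟪x, a⟫ := real_inner_comm x a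
  have balance_id := neg_integral_apply_id_of_weak_balance
    (L := fun ω => frobeniusPairing (M ω)) (B := fun ω => innerSL ℝ (A ω)) hX
    (integrable_frobeniusPairing hM) (by simpa only [inner_comm_apply] using hXA)
    fun Φ hΦ hΦ_supp => by
      simp only [frobeniusPairing_fderiv _ (hΦ.differentiable (by simp) _), hweak Φ hΦ hΦ_supp,
        innerSL_apply_apply, PiLp.inner_apply, RCLike.inner_apply, conj_trivial]
  simpa only [frobeniusPairing_id, inner_comm_apply] using balance_id.symm

end Coordinates

theorem second_deriv_norm_sq_bound_of_weak_balance_general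
    {Ω ι : Type*} [Fintype ι] [DecidableEq ι] {m mΩ : MeasurableSpace Ω} (hm : m ≤ mΩ)
    {P : Measure[mΩ] Ω} [IsFiniteMeasure P] {T : Set ℝ} (hT : UniqueDiffOn ℝ T)
    {X X' : ℝ → Ω → EuclideanSpace ℝ ι} {A : Ω → EuclideanSpace ℝ ι} {t : ℝ} (ht : t ∈ T)
    (hderiv : ∀ ω, ∀ s ∈ T, HasDerivWithinAt (fun u => X u ω) (X' s ω) T s)
    (hderiv' : ∀ ω, HasDerivWithinAt (fun u => X' u ω) (A ω) T t)
    (hX : AEStronglyMeasurable (X t) P) (hX' : MemLp (X' t) 2 P)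
    (hXA : Integrable (fun ω => ⟪X t ω, A ω⟫) P) {M : Ω → Matrix ι ι ℝ}
    (hM : ∀ i j, (fun ω => M ω i j)
      =ᵐ[P] condCov m (fun ω => X' t ω i) (fun ω => X' t ω j) P)
    (hweak : ∀ Φ : EuclideanSpace ℝ ι → EuclideanSpace ℝ ι,
      ContDiff ℝ (⊤ : ℕ∞) Φ → HasCompactSupport Φ →
      -∫ ω, (∑ i, ∑ j, fderiv ℝ (fun y => Φ y j) (X t ω) (EuclideanSpace.single i 1)
          * M ω i j) ∂P
        = ∫ ω, (∑ i, Φ (X t ω) i * A ω i) ∂P) :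
    ∫ ω, derivWithin (fun s => derivWithin (fun u => ‖X u ω‖ ^ 2) T s) T t ∂P
      ≤ 2 * ∫ ω, ‖X' t ω‖ ^ 2 ∂P := by
  have hX'_coord (i : ι) : MemLp (fun ω => X' t ω i) 2 P :=
    (EuclideanSpace.proj (𝕜 := ℝ) i).comp_memLp' hX'
  have hM_int (i j : ι) : Integrable (fun ω => M ω i j) P :=
    (integrable_condCov (hX'_coord i) (hX'_coord j)).congr (hM i j).symm
  have trace_nonneg : 0 ≤ ∫ ω, (M ω).trace ∂P := by
    simp only [Matrix.trace, Matrix.diag_apply]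
    rw [integral_finsetSum _ fun i _ => hM_int i i]
    exact Finset.sum_nonneg fun i _ => integral_nonneg_of_ae
      ((condCov_self_nonneg hm (hX'_coord i)).trans_eq (hM i i).symm)
  have hX'_sq : Integrable (fun ω => ‖X' t ω‖ ^ 2) P := hX'.integrable_norm_pow two_ne_zero
  simp only [fun ω => derivWithin_derivWithin_norm_sq hT ht (hderiv ω) (hderiv' ω)]
  rw [integral_add (hXA.const_mul 2) (hX'_sq.const_mul 2), integral_const_mul, integral_const_mul,
    integral_inner_eq_neg_integral_trace_of_weak_balance hX hM_int hXA hweak]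
  linarith

/-- For a process with C² sample paths and square-integrable
`X_t, Ẋ_t, Ẍ_t, Π_t(X_t)`, the weak balance law
`−E[(DΦ)(X_t) : Π_t(X_t)] = E[Φ(X_t)·Ẍ_t]` (for all smooth compactly supported `Φ`)
implies, via the pathwise identity `∂_tt ‖X_t‖² = 2 X_t·Ẍ_t + 2‖Ẋ_t‖²`, that
`E[∂_tt ‖X_t‖²] ≤ 2 E[‖Ẋ_t‖²]`. -/
theorem second_deriv_norm_sq_bound_of_weak_balance
    {Ω : Type*} [MeasurableSpace Ω] (P : Measure Ω) [IsProbabilityMeasure P]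
    (d : ℕ) (hd : 1 ≤ d)
    (X X' X'' : ℝ → Ω → EuclideanSpace ℝ (Fin d))
    (hXmeas : ∀ s, Measurable (X s))
    (hX'meas : ∀ s, Measurable (X' s))
    (hX''meas : ∀ s, Measurable (X'' s))
    (hderiv : ∀ ω, ∀ s ∈ Icc (0:ℝ) 1,
        HasDerivWithinAt (fun u => X u ω) (X' s ω) (Icc (0:ℝ) 1) s)
    (hderiv' : ∀ ω, ∀ s ∈ Icc (0:ℝ) 1,
        HasDerivWithinAt (fun u => X' u ω) (X'' s ω) (Icc (0:ℝ) 1) s)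
    (hcont : ∀ ω, ContinuousOn (fun s => X'' s ω) (Icc (0:ℝ) 1))
    (t : ℝ) (ht : t ∈ Icc (0:ℝ) 1)
    (hX2 : Integrable (fun ω => ‖X t ω‖ ^ 2) P)
    (hX'2 : Integrable (fun ω => ‖X' t ω‖ ^ 2) P)
    (hX''2 : Integrable (fun ω => ‖X'' t ω‖ ^ 2) P)
    (Pmat : EuclideanSpace ℝ (Fin d) → Matrix (Fin d) (Fin d) ℝ)
    (hPmeas : ∀ i j : Fin d, Measurable fun x => Pmat x i j)
    (hP2 : Integrable (fun ω => ∑ i, ∑ j, (Pmat (X t ω) i j) ^ 2) P)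
    (hReynolds : ∀ i j : Fin d,
        (fun ω => Pmat (X t ω) i j)
          =ᵐ[P] fun ω =>
            (P[(fun ω' => X' t ω' i * X' t ω' j) |
                MeasurableSpace.comap (X t) inferInstance]) ω
            - (P[(fun ω' => X' t ω' i) | MeasurableSpace.comap (X t) inferInstance]) ω
              * (P[(fun ω' => X' t ω' j) | MeasurableSpace.comap (X t) inferInstance]) ω)
    (hweak : ∀ Φ : EuclideanSpace ℝ (Fin d) → EuclideanSpace ℝ (Fin d),
        ContDiff ℝ (⊤ : ℕ∞) Φ → HasCompactSupport Φ →
        -∫ ω, (∑ i, ∑ j,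
            fderiv ℝ (fun y => Φ y j) (X t ω) (EuclideanSpace.single i 1)
              * Pmat (X t ω) i j) ∂P
          = ∫ ω, (∑ i, Φ (X t ω) i * X'' t ω i) ∂P) :
    ∫ ω, derivWithin (fun s => derivWithin (fun u => ‖X u ω‖ ^ 2) (Icc (0:ℝ) 1) s)
        (Icc (0:ℝ) 1) t ∂P
      ≤ 2 * ∫ ω, ‖X' t ω‖ ^ 2 ∂P :=
  second_deriv_norm_sq_bound_of_weak_balance_general (hXmeas t).comap_le
    (uniqueDiffOn_Icc zero_lt_one) ht hderiv (fun ω => hderiv' ω t ht)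
    (hXmeas t).aestronglyMeasurable
    ((memLp_two_iff_integrable_sq_norm (hX'meas t).aestronglyMeasurable).2 hX'2)
    (integrable_inner_of_memLp_two
      ((memLp_two_iff_integrable_sq_norm (hXmeas t).aestronglyMeasurable).2 hX2)
      ((memLp_two_iff_integrable_sq_norm (hX''meas t).aestronglyMeasurable).2 hX''2))
    hReynolds hweak
end
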